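/- Hardy-type inequality for the (p,A)-Laplacian (case 1 < p ≤ n): let 0 ∈ Ω, Ω* := Ω \ {0}, and 1 < p ≤ n. Suppose −Δ_{p,A} is subcritical in Ω, and suppose G ∈ C¹(Ω*) is a positive weakly (p,A)-harmonic function in Ω* with G(x) → ∞ as x → 0 and G → 0 at infinity in Ω. Then for every φ ∈ C_c^∞(Ω*): ∫_{Ω*} |∇φ|_A^p dx ≥ ((p−1)/p)^p ∫_{Ω*} (|∇G|_A / G)^p |φ|^p dx. -/

import Mathlib

/-! The inequality follows from testing the equation of `G` with `ψ = |φ|^p G^{1-p}` (the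
Picone-type argument).

Put `a = |∇G|_A |φ| / G` and `b = |∇φ|_A`. The chain rule and the Cauchy–Schwarz inequality for
`⟨A ·, ·⟩` give the pointwise bound
`|∇G|_A^{p-2} ⟨A∇G, ∇ψ⟩ ≤ p a^{p-1} b - (p-1) a^p` (`pairing_le`), while Young's inequality gives
`((p-1)/p)^p a^p + ((p-1)/p)^{p-1} (p a^{p-1} b - (p-1) a^p) ≤ b^p` (`young_hardy`). Integrating the
combination, the pairing term vanishes by harmonicity and the claim remains.

The function `ψ` is only `C¹` with compact support, so the weak equation has to be extended from
smooth test functions to `C¹` ones (`IsPAHarmonic.integral_eq_zero_of_contDiff_one`). This is done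
by mollification (`exists_testFun_gradient_close`): the field `|∇G|_A^{p-2} A∇G` is bounded on
compact subsets and the gradients of the mollified functions converge uniformly. -/

open MeasureTheory Set Filter Topology

noncomputable section

variable {n : ℕ}

/-- The `A`-inner product `⟨A(x)ξ, η⟩`. -/
def aInner (A : EuclideanSpace ℝ (Fin n) → Matrix (Fin n) (Fin n) ℝ)
    (x ξ η : EuclideanSpace ℝ (Fin n)) : ℝ :=
  ∑ i, ∑ j, A x i j * ξ j * η i

/-- `|ξ|_A := ⟨A(x)ξ, ξ⟩^{1/2}`. -/
def aNorm (A : EuclideanSpace ℝ (Fin n) → Matrix (Fin n) (Fin n) ℝ)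
    (x ξ : EuclideanSpace ℝ (Fin n)) : ℝ :=
  Real.sqrt (aInner A x ξ ξ)

/-- Assumptions on the matrix field `A`: symmetric, positive definite, locally Hölder
continuous, and locally uniformly elliptic on `Ω`. -/
structure IsEllipticMatrix (Ω : Set (EuclideanSpace ℝ (Fin n)))
    (A : EuclideanSpace ℝ (Fin n) → Matrix (Fin n) (Fin n) ℝ) : Prop where
  symm : ∀ x ∈ Ω, (A x).IsSymm
  posdef : ∀ x ∈ Ω, ∀ ξ : EuclideanSpace ℝ (Fin n), ξ ≠ 0 → 0 < aInner A x ξ ξ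
  locHolder : ∀ K ⊆ Ω, IsCompact K → ∃ C > (0:ℝ), ∃ α ∈ Set.Ioc (0:ℝ) 1,
      ∀ x ∈ K, ∀ y ∈ K, ∀ i j, |A x i j - A y i j| ≤ C * dist x y ^ α
  elliptic : ∀ K ⊆ Ω, IsCompact K → ∃ Θ > (0:ℝ), ∀ x ∈ K, ∀ ξ : EuclideanSpace ℝ (Fin n),
      Θ⁻¹ * ‖ξ‖ ^ 2 ≤ aInner A x ξ ξ ∧ aInner A x ξ ξ ≤ Θ * ‖ξ‖ ^ 2

/-- Test functions: `C_c^∞` functions with support in `U`. -/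
def IsTestFun (U : Set (EuclideanSpace ℝ (Fin n))) (ψ : EuclideanSpace ℝ (Fin n) → ℝ) : Prop :=
  ContDiff ℝ (⊤ : ℕ∞) ψ ∧ HasCompactSupport ψ ∧ tsupport ψ ⊆ U

/-- Weakly `(p,A)`-harmonic in `U`. -/
def IsPAHarmonic (A : EuclideanSpace ℝ (Fin n) → Matrix (Fin n) (Fin n) ℝ) (p : ℝ)
    (U : Set (EuclideanSpace ℝ (Fin n))) (G : EuclideanSpace ℝ (Fin n) → ℝ) : Prop :=
  ∀ ψ, IsTestFun U ψ →
    ∫ x in U, (aNorm A x (gradient G x)) ^ (p - 2) *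
      aInner A x (gradient G x) (gradient ψ x) = 0

/-- Weak solution of `Q_{p,A,V}(u) = g` in `U` (for positive `u`). -/
def IsWeakSolution (A : EuclideanSpace ℝ (Fin n) → Matrix (Fin n) (Fin n) ℝ) (p : ℝ)
    (V g : EuclideanSpace ℝ (Fin n) → ℝ) (U : Set (EuclideanSpace ℝ (Fin n)))
    (u : EuclideanSpace ℝ (Fin n) → ℝ) : Prop :=
  ∀ ψ, IsTestFun U ψ →
    (∫ x in U, (aNorm A x (gradient u x)) ^ (p - 2) *
        aInner A x (gradient u x) (gradient ψ x))
      + (∫ x in U, V x * u x ^ (p - 1) * ψ x)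
      = ∫ x in U, g x * ψ x

/-- Weak supersolution of `Q_{p,A,V}(u) = 0` in `U` (for positive `u`). -/
def IsWeakSupersolution (A : EuclideanSpace ℝ (Fin n) → Matrix (Fin n) (Fin n) ℝ) (p : ℝ)
    (V : EuclideanSpace ℝ (Fin n) → ℝ) (U : Set (EuclideanSpace ℝ (Fin n)))
    (u : EuclideanSpace ℝ (Fin n) → ℝ) : Prop :=
  ∀ ψ, IsTestFun U ψ → (∀ x, 0 ≤ ψ x) →
    0 ≤ (∫ x in U, (aNorm A x (gradient u x)) ^ (p - 2) *
        aInner A x (gradient u x) (gradient ψ x))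
      + (∫ x in U, V x * u x ^ (p - 1) * ψ x)

/-- `Q_{p,A,V}` is subcritical in `Ω`. -/
def IsSubcritical (A : EuclideanSpace ℝ (Fin n) → Matrix (Fin n) (Fin n) ℝ) (p : ℝ)
    (V : EuclideanSpace ℝ (Fin n) → ℝ) (Ω : Set (EuclideanSpace ℝ (Fin n))) : Prop :=
  ∃ W₀ : EuclideanSpace ℝ (Fin n) → ℝ, ContinuousOn W₀ Ω ∧ (∀ x ∈ Ω, 0 ≤ W₀ x) ∧
    (∃ x ∈ Ω, W₀ x ≠ 0) ∧
    ∀ ψ, IsTestFun Ω ψ →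
      0 ≤ ∫ x in Ω, ((aNorm A x (gradient ψ x)) ^ p + (V x - W₀ x) * |ψ x| ^ p)

/-- A null-sequence for `Q_{p,A,V}` in `U`. -/
def IsNullSequence (A : EuclideanSpace ℝ (Fin n) → Matrix (Fin n) (Fin n) ℝ) (p : ℝ)
    (V : EuclideanSpace ℝ (Fin n) → ℝ) (U : Set (EuclideanSpace ℝ (Fin n)))
    (u : ℕ → EuclideanSpace ℝ (Fin n) → ℝ) : Prop :=
  (∀ k, IsTestFun U (u k)) ∧ (∀ k x, 0 ≤ u k x) ∧
  (∃ B : Set (EuclideanSpace ℝ (Fin n)), IsOpen B ∧ B.Nonempty ∧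
      IsCompact (closure B) ∧ closure B ⊆ U ∧
      ∃ c > (0:ℝ), ∀ k, c ≤ (∫ x in B, u k x ^ p) ∧ (∫ x in B, u k x ^ p) ≤ c⁻¹) ∧
  Tendsto (fun k => ∫ x in U,
      ((aNorm A x (gradient (u k) x)) ^ p + V x * |u k x| ^ p)) atTop (𝓝 0)

/-- `V` lies in the local Morrey space `M^q_loc(p;Ω)`. -/
def InMorreyLoc (p : ℝ) (Ω : Set (EuclideanSpace ℝ (Fin n)))
    (V : EuclideanSpace ℝ (Fin n) → ℝ) : Prop :=
  if p < n then
    ∃ q : ℝ, q > (n : ℝ) / p ∧ ∀ ω : Set (EuclideanSpace ℝ (Fin n)),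
      IsOpen ω → IsCompact (closure ω) → closure ω ⊆ Ω →
      ∃ M : ℝ, ∀ y ∈ ω, ∀ r ∈ Set.Ioo (0:ℝ) (Metric.diam ω),
        r ^ ((n : ℝ) / q - n) * (∫ x in ω ∩ Metric.ball y r, |V x|) ≤ M
  else if (n : ℝ) < p then
    MeasureTheory.LocallyIntegrableOn V Ω
  else
    ∃ q : ℝ, q > (n : ℝ) ∧ ∀ ω : Set (EuclideanSpace ℝ (Fin n)),
      IsOpen ω → IsCompact (closure ω) → closure ω ⊆ Ω →
      ∃ M : ℝ, ∀ y ∈ ω, ∀ r ∈ Set.Ioo (0:ℝ) (Metric.diam ω),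
        (Real.log (Metric.diam ω / r)) ^ (q * ((n : ℝ) - 1) / n) *
          (∫ x in ω ∩ Metric.ball y r, |V x|) ≤ M

/-- `G ∈ C^{1,α}(U)`: continuously differentiable with locally `α`-Hölder gradient. -/
def IsC1Holder (α : ℝ) (U : Set (EuclideanSpace ℝ (Fin n)))
    (G : EuclideanSpace ℝ (Fin n) → ℝ) : Prop :=
  ContDiffOn ℝ 1 G U ∧ ∀ K ⊆ U, IsCompact K → ∃ C : ℝ,
    ∀ x ∈ K, ∀ y ∈ K, ‖gradient G x - gradient G y‖ ≤ C * dist x y ^ α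

/-- `G → 0` at infinity in `Ω` (where `G` is considered on `U ⊆ Ω`). -/
def TendstoZeroAtInfinityIn (Ω U : Set (EuclideanSpace ℝ (Fin n)))
    (G : EuclideanSpace ℝ (Fin n) → ℝ) : Prop :=
  ∀ ε > (0:ℝ), ∃ K ⊆ Ω, IsCompact K ∧ ∀ x ∈ U \ K, G x < ε

open scoped Classical in
/-- Flux integral `∫_S |∇G|_A^p / |∇G| dH^{n-1}`, with integrand `0` where `∇G = 0`. -/
def fluxIntegral (A : EuclideanSpace ℝ (Fin n) → Matrix (Fin n) (Fin n) ℝ) (p : ℝ)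
    (G : EuclideanSpace ℝ (Fin n) → ℝ) (S : Set (EuclideanSpace ℝ (Fin n))) : ℝ :=
  ∫ x in S, (if gradient G x = 0 then 0
    else (aNorm A x (gradient G x)) ^ p / ‖gradient G x‖) ∂(μH[(n : ℝ) - 1])

end

/-! ### The `A`-inner product and pointwise inequalities -/

section Algebra

variable {n : ℕ} {A : EuclideanSpace ℝ (Fin n) → Matrix (Fin n) (Fin n) ℝ}

lemma aInner_add_right (x ξ η ζ : EuclideanSpace ℝ (Fin n)) :
    aInner A x ξ (η + ζ) = aInner A x ξ η + aInner A x ξ ζ := by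
  simp [aInner, mul_add, Finset.sum_add_distrib]

lemma aInner_smul_right (x ξ η : EuclideanSpace ℝ (Fin n)) (c : ℝ) :
    aInner A x ξ (c • η) = c * aInner A x ξ η := by
  simp only [aInner, Finset.mul_sum, PiLp.smul_apply, smul_eq_mul]
  refine Finset.sum_congr rfl fun i _ => Finset.sum_congr rfl fun j _ => by ring

lemma aInner_sub_right (x ξ η ζ : EuclideanSpace ℝ (Fin n)) :
    aInner A x ξ (η - ζ) = aInner A x ξ η - aInner A x ξ ζ := by
  simp [aInner, mul_sub, Finset.sum_sub_distrib]

lemma aInner_zero_right (x ξ : EuclideanSpace ℝ (Fin n)) : aInner A x ξ 0 = 0 := by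
  simp [aInner]

lemma aNorm_zero (x : EuclideanSpace ℝ (Fin n)) : aNorm A x 0 = 0 := by
  simp [aNorm, aInner_zero_right]

lemma aNorm_nonneg (x ξ : EuclideanSpace ℝ (Fin n)) : 0 ≤ aNorm A x ξ := Real.sqrt_nonneg _

variable {Ω : Set (EuclideanSpace ℝ (Fin n))}

lemma IsEllipticMatrix.aInner_comm (hA : IsEllipticMatrix Ω A) {x : EuclideanSpace ℝ (Fin n)}
    (hx : x ∈ Ω) (ξ η : EuclideanSpace ℝ (Fin n)) : aInner A x ξ η = aInner A x η ξ := by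
  unfold aInner
  rw [Finset.sum_comm]
  refine Finset.sum_congr rfl fun i _ => Finset.sum_congr rfl fun j _ => ?_
  rw [(hA.symm x hx).apply i j]
  ring

lemma IsEllipticMatrix.aInner_self_nonneg (hA : IsEllipticMatrix Ω A)
    {x : EuclideanSpace ℝ (Fin n)} (hx : x ∈ Ω) (ξ : EuclideanSpace ℝ (Fin n)) :
    0 ≤ aInner A x ξ ξ := by
  by_cases h : ξ = 0
  · simp [h, aInner_zero_right]
  · exact (hA.posdef x hx ξ h).le

lemma IsEllipticMatrix.aNorm_sq (hA : IsEllipticMatrix Ω A)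
    {x : EuclideanSpace ℝ (Fin n)} (hx : x ∈ Ω) (ξ : EuclideanSpace ℝ (Fin n)) :
    aNorm A x ξ ^ 2 = aInner A x ξ ξ :=
  Real.sq_sqrt (hA.aInner_self_nonneg hx ξ)

/-- Cauchy–Schwarz inequality for the `A`-inner product. -/
lemma IsEllipticMatrix.abs_aInner_le (hA : IsEllipticMatrix Ω A)
    {x : EuclideanSpace ℝ (Fin n)} (hx : x ∈ Ω) (ξ η : EuclideanSpace ℝ (Fin n)) :
    |aInner A x ξ η| ≤ aNorm A x ξ * aNorm A x η := by
  have h : ∀ t : ℝ, 0 ≤ aInner A x η η * (t * t) + (2 * aInner A x ξ η) * t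
      + aInner A x ξ ξ := by
    intro t
    have h1 := hA.aInner_self_nonneg hx (ξ + t • η)
    rw [aInner_add_right, aInner_smul_right, hA.aInner_comm hx _ ξ, hA.aInner_comm hx _ η,
      aInner_add_right, aInner_add_right, aInner_smul_right, aInner_smul_right,
      hA.aInner_comm hx η ξ] at h1
    linarith
  have h2 := discrim_le_zero h
  rw [discrim] at h2
  refine abs_le_of_sq_le_sq ?_ (mul_nonneg (aNorm_nonneg _ _) (aNorm_nonneg _ _))
  rw [mul_pow, hA.aNorm_sq hx, hA.aNorm_sq hx]
  linarith

/-- The flux pairing is controlled by `|ξ|_A^{p-1} |η|_A`; at `ξ = 0` both sides vanish, whatever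
the value of the negative power. -/
lemma IsEllipticMatrix.abs_pairing_le (hA : IsEllipticMatrix Ω A)
    {x : EuclideanSpace ℝ (Fin n)} (hx : x ∈ Ω) {p : ℝ} (hp : 1 < p)
    (ξ η : EuclideanSpace ℝ (Fin n)) :
    |aNorm A x ξ ^ (p - 2) * aInner A x ξ η| ≤ aNorm A x ξ ^ (p - 1) * aNorm A x η := by
  have h0 := aNorm_nonneg (A := A) x ξ
  rw [abs_mul, abs_of_nonneg (Real.rpow_nonneg h0 _)]
  calc _ ≤ aNorm A x ξ ^ (p - 2) * (aNorm A x ξ * aNorm A x η) :=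
        mul_le_mul_of_nonneg_left (hA.abs_aInner_le hx ξ η) (Real.rpow_nonneg h0 _)
    _ = aNorm A x ξ ^ (p - 2) * aNorm A x ξ * aNorm A x η := by ring
    _ = _ := by
        congr 1
        rcases h0.eq_or_lt with h | h
        · rw [← h, mul_zero, Real.zero_rpow (by linarith)]
        · rw [← Real.rpow_add_one h.ne']
          congr 1
          ring

/-- Young's inequality, arranged so that the coefficient of `a ^ p` is the Hardy constant. -/
lemma young_hardy {a b p : ℝ} (ha : 0 ≤ a) (hb : 0 ≤ b) (hp : 1 < p) :
    ((p - 1) / p) ^ p * a ^ p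
      + ((p - 1) / p) ^ (p - 1) * (p * (a ^ (p - 1) * b) - (p - 1) * a ^ p) ≤ b ^ p := by
  have hp0 : 0 < p := by linarith
  have hl : 0 < (p - 1) / p := div_pos (by linarith) hp0
  set l := (p - 1) / p with hldef
  have hpl : l * p = p - 1 := by rw [hldef]; field_simp
  have hq : Real.HolderConjugate p (p / (p - 1)) := Real.HolderConjugate.conjExponent hp
  have hy := Real.young_inequality_of_nonneg hb
    (Real.rpow_nonneg (mul_nonneg hl.le ha) (p - 1)) hq
  have h1 : ((l * a) ^ (p - 1)) ^ (p / (p - 1)) = l ^ p * a ^ p := by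
    rw [← Real.rpow_mul (mul_nonneg hl.le ha), Real.mul_rpow hl.le ha]
    have : (p - 1) * (p / (p - 1)) = p := by
      have : p - 1 ≠ 0 := by linarith
      field_simp
    rw [this]
  rw [h1, Real.mul_rpow hl.le ha] at hy
  have h2 : l ^ p = l ^ (p - 1) * l := by
    rw [← Real.rpow_add_one hl.ne']; congr 1; ring
  have h3 : l ^ p * a ^ p / (p / (p - 1)) * p = (p - 1) * (l ^ p * a ^ p) := by
    have : p - 1 ≠ 0 := by linarith
    field_simp
  have h4 : b ^ p / p * p = b ^ p := by field_simp
  have hy' := mul_le_mul_of_nonneg_right hy hp0.le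
  rw [add_mul, h3, h4] at hy'
  have h5 : (p - 1) * l ^ (p - 1) * a ^ p = p * (l ^ p * a ^ p) := by
    rw [h2, ← hpl]; ring
  nlinarith [hy', h5]

/-- The pointwise bound for the pairing of `∇G` with the gradient of `|φ|^p G^{1-p}`; here `s`, `γ`,
`g`, `b`, `c` stand for the values of `φ`, `G`, `|∇G|_A`, `|∇φ|_A`, `⟨A∇G, ∇φ⟩`. -/
lemma pairing_le {p s γ g b c : ℝ} (hp : 1 < p) (hγ : 0 < γ) (hg : 0 ≤ g)
    (hc : |g ^ (p - 2) * c| ≤ g ^ (p - 1) * b) :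
    g ^ (p - 2) * (γ ^ (1 - p) * (p * |s| ^ (p - 2) * s) * c
        + |s| ^ p * ((1 - p) * γ ^ (-p)) * g ^ 2)
      ≤ p * ((g / γ * |s|) ^ (p - 1) * b) - (p - 1) * (g / γ * |s|) ^ p := by
  have hs := abs_nonneg s
  have hs1 : |s| ^ (p - 2) * |s| = |s| ^ (p - 1) := by
    rcases hs.eq_or_lt with h | h
    · rw [← h, mul_zero, Real.zero_rpow (by linarith)]
    · rw [← Real.rpow_add_one h.ne']; congr 1; ring
  have hg2 : g ^ (p - 2) * g ^ 2 = g ^ p := by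
    rcases hg.eq_or_lt with h | h
    · rw [← h, Real.zero_rpow (x := p) (by linarith)]; simp
    · rw [← Real.rpow_natCast, ← Real.rpow_add h]; congr 1; push_cast; ring
  have e1 : (g / γ * |s|) ^ p = g ^ p * γ ^ (-p) * |s| ^ p := by
    rw [Real.mul_rpow (by positivity) hs, Real.div_rpow hg hγ.le, Real.rpow_neg hγ.le]
    rfl
  have e2 : (g / γ * |s|) ^ (p - 1) = g ^ (p - 1) * γ ^ (1 - p) * |s| ^ (p - 1) := by
    rw [Real.mul_rpow (by positivity) hs, Real.div_rpow hg hγ.le,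
      show 1 - p = -(p - 1) by ring, Real.rpow_neg hγ.le]
    rfl
  rw [e1, e2, ← hg2, ← hs1]
  have hk : 0 ≤ p * γ ^ (1 - p) * |s| ^ (p - 2) :=
    mul_nonneg (mul_nonneg (by linarith) (Real.rpow_nonneg hγ.le _)) (Real.rpow_nonneg hs _)
  have h1 : s * (g ^ (p - 2) * c) ≤ |s| * (g ^ (p - 1) * b) :=
    (le_abs_self _).trans (by rw [abs_mul]; exact mul_le_mul_of_nonneg_left hc hs)
  have h2 := mul_le_mul_of_nonneg_left h1 hk
  linarith

end Algebra

/-! ### Integrability, mollification, and `C¹` test functions -/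

section Integration

variable {n : ℕ} {A : EuclideanSpace ℝ (Fin n) → Matrix (Fin n) (Fin n) ℝ}
  {Ω K U : Set (EuclideanSpace ℝ (Fin n))}

lemma IsEllipticMatrix.continuousOn_entry (hA : IsEllipticMatrix Ω A) (hKΩ : K ⊆ Ω)
    (hK : IsCompact K) (i j : Fin n) : ContinuousOn (fun x => A x i j) K := by
  obtain ⟨C, hC, α, hα, h⟩ := hA.locHolder K hKΩ hK
  intro x hx
  rw [ContinuousWithinAt, tendsto_iff_dist_tendsto_zero]
  have hlim : Tendsto (fun y => C * dist y x ^ α) (𝓝[K] x) (𝓝 0) := by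
    have h1 : Continuous fun y : EuclideanSpace ℝ (Fin n) => C * dist y x ^ α :=
      continuous_const.mul
        ((continuous_id.dist continuous_const).rpow_const fun _ => Or.inr hα.1.le)
    have h2 := (h1.tendsto x).mono_left (nhdsWithin_le_nhds (s := K))
    simpa [Real.zero_rpow hα.1.ne'] using h2
  refine squeeze_zero' (Eventually.of_forall fun _ => dist_nonneg) ?_ hlim
  filter_upwards [self_mem_nhdsWithin] with y hy
  exact h y hy x hx i j

lemma IsEllipticMatrix.continuousOn_aInner (hA : IsEllipticMatrix Ω A) (hKΩ : K ⊆ Ω)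
    (hK : IsCompact K) {X Y : EuclideanSpace ℝ (Fin n) → EuclideanSpace ℝ (Fin n)}
    (hX : ContinuousOn X K) (hY : ContinuousOn Y K) :
    ContinuousOn (fun x => aInner A x (X x) (Y x)) K := by
  unfold aInner
  refine continuousOn_finsetSum _ fun i _ => continuousOn_finsetSum _ fun j _ => ?_
  have hc : ∀ k : Fin n, Continuous fun v : EuclideanSpace ℝ (Fin n) => v k := fun k => by fun_prop
  exact ((hA.continuousOn_entry hKΩ hK i j).mul ((hc j).comp_continuousOn hX)).mul
    ((hc i).comp_continuousOn hY)

lemma IsEllipticMatrix.continuousOn_aNorm (hA : IsEllipticMatrix Ω A) (hKΩ : K ⊆ Ω)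
    (hK : IsCompact K) {X : EuclideanSpace ℝ (Fin n) → EuclideanSpace ℝ (Fin n)}
    (hX : ContinuousOn X K) : ContinuousOn (fun x => aNorm A x (X x)) K :=
  Real.continuous_sqrt.comp_continuousOn (hA.continuousOn_aInner hKΩ hK hX hX)

/-- The factor `|X|_A^{p-2}` may be singular for `p < 2`; integrability comes from
`abs_pairing_le`. -/
lemma IsEllipticMatrix.integrableOn_pairing (hA : IsEllipticMatrix Ω A) (hKΩ : K ⊆ Ω)
    (hK : IsCompact K) {p : ℝ} (hp : 1 < p)
    {X Y : EuclideanSpace ℝ (Fin n) → EuclideanSpace ℝ (Fin n)}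
    (hX : ContinuousOn X K) (hY : ContinuousOn Y K) :
    IntegrableOn (fun x => aNorm A x (X x) ^ (p - 2) * aInner A x (X x) (Y x)) K := by
  have hdom : IntegrableOn (fun x => aNorm A x (X x) ^ (p - 1) * aNorm A x (Y x)) K :=
    (((hA.continuousOn_aNorm hKΩ hK hX).rpow_const fun _ _ => Or.inr (by linarith)).mul
      (hA.continuousOn_aNorm hKΩ hK hY)).integrableOn_compact hK
  refine Integrable.mono' hdom ?_ ?_
  · exact ((((hA.continuousOn_aNorm hKΩ hK hX).aestronglyMeasurable
      hK.measurableSet).aemeasurable.pow_const _).mul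
      ((hA.continuousOn_aInner hKΩ hK hX hY).aestronglyMeasurable
        hK.measurableSet).aemeasurable).aestronglyMeasurable
  · filter_upwards [ae_restrict_mem hK.measurableSet] with x hx
    exact hA.abs_pairing_le (hKΩ hx) hp _ _

lemma continuousOn_gradient {f : EuclideanSpace ℝ (Fin n) → ℝ} (hU : IsOpen U)
    (hf : ContDiffOn ℝ 1 f U) : ContinuousOn (gradient f) U :=
  (InnerProductSpace.toDual ℝ _).symm.continuous.comp_continuousOn
    (hf.continuousOn_fderiv_of_isOpen hU le_rfl)

lemma gradient_eq_zero_of_notMem {f : EuclideanSpace ℝ (Fin n) → ℝ}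
    {x : EuclideanSpace ℝ (Fin n)} (hx : x ∉ tsupport f) : gradient f x = 0 := by
  have : fderiv ℝ f x = 0 := by
    by_contra h
    exact hx (support_fderiv_subset ℝ h)
  simp [gradient, this]

open Pointwise in
/-- Mollification: a compactly supported `C¹` function is approximated in the `C¹` sense by test
functions supported in a fixed compact set. -/
lemma exists_testFun_gradient_close {ψ : EuclideanSpace ℝ (Fin n) → ℝ} (hU : IsOpen U)
    (hψ : ContDiff ℝ 1 ψ) (hc : HasCompactSupport ψ) (hs : tsupport ψ ⊆ U) :
    ∃ K ⊆ U, IsCompact K ∧ tsupport ψ ⊆ K ∧ ∀ ε > (0 : ℝ), ∃ χ, IsTestFun U χ ∧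
      tsupport χ ⊆ K ∧ ∀ x, ‖gradient χ x - gradient ψ x‖ ≤ ε := by
  obtain ⟨δ, hδ, hδU⟩ := IsCompact.exists_cthickening_subset_open hc hU hs
  refine ⟨Metric.cthickening δ (tsupport ψ), hδU, IsCompact.cthickening hc,
    Metric.self_subset_cthickening _, fun ε hε => ?_⟩
  have hcont : Continuous (fderiv ℝ ψ) := hψ.continuous_fderiv one_ne_zero
  have huc : UniformContinuous (fderiv ℝ ψ) :=
    (hc.fderiv ℝ).uniformContinuous_of_continuous hcont
  obtain ⟨r, hr, hruc⟩ := Metric.uniformContinuous_iff.1 huc ε hε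
  let m := min r δ
  have hm : 0 < m := lt_min hr hδ
  let β : ContDiffBump (0 : EuclideanSpace ℝ (Fin n)) := ⟨m / 2, m, half_pos hm, half_lt_self hm⟩
  let χ := convolution (β.normed volume) ψ (ContinuousLinearMap.lsmul ℝ ℝ) volume
  have hχK : tsupport χ ⊆ Metric.cthickening δ (tsupport ψ) := by
    refine closure_minimal ?_ Metric.isClosed_cthickening
    refine (support_convolution_subset _).trans ?_
    rw [β.support_normed_eq, ← IsCompact.add_closedBall_zero hc hδ.le, add_comm]
    refine Set.add_subset_add subset_closure ?_
    exact Metric.ball_subset_closedBall.trans (Metric.closedBall_subset_closedBall (min_le_right _ _))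
  refine ⟨χ, ⟨?_, ?_, hχK.trans hδU⟩, hχK, fun x => ?_⟩
  · exact β.hasCompactSupport_normed.contDiff_convolution_left _ β.contDiff_normed
      hψ.continuous.locallyIntegrable
  · exact (IsCompact.cthickening hc).of_isClosed_subset (isClosed_tsupport _) hχK
  · have hd := hc.hasFDerivAt_convolution_right (ContinuousLinearMap.lsmul ℝ ℝ)
      (μ := volume) (f := β.normed volume) β.continuous_normed.locallyIntegrable hψ x
    have hpre : ContinuousLinearMap.precompR (EuclideanSpace ℝ (Fin n))
        (ContinuousLinearMap.lsmul ℝ ℝ : ℝ →L[ℝ] ℝ →L[ℝ] ℝ) = ContinuousLinearMap.lsmul ℝ ℝ := by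
      ext a f
      simp
    rw [hpre] at hd
    have hdist := ContDiffBump.dist_normed_convolution_le (φ := β) (μ := volume) (x₀ := x) (ε := ε)
      hcont.aestronglyMeasurable
      fun y hy => (hruc ((Metric.mem_ball.1 hy).trans_le (min_le_left _ _))).le
    rw [gradient, gradient, ← map_sub, LinearIsometryEquiv.norm_map, hd.fderiv, ← dist_eq_norm]
    exact hdist

/-- The weak equation may be tested with compactly supported `C¹` functions. -/
lemma IsPAHarmonic.integral_eq_zero_of_contDiff_one (hA : IsEllipticMatrix Ω A) {p : ℝ}
    (hp : 1 < p) (hU : IsOpen U) (hUΩ : U ⊆ Ω) {G : EuclideanSpace ℝ (Fin n) → ℝ}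
    (hG : ContDiffOn ℝ 1 G U) (hharm : IsPAHarmonic A p U G)
    {ψ : EuclideanSpace ℝ (Fin n) → ℝ} (hψ : ContDiff ℝ 1 ψ) (hc : HasCompactSupport ψ)
    (hs : tsupport ψ ⊆ U) :
    ∫ x in U, aNorm A x (gradient G x) ^ (p - 2) *
      aInner A x (gradient G x) (gradient ψ x) = 0 := by
  obtain ⟨K, hKU, hK, hψK, happ⟩ := exists_testFun_gradient_close hU hψ hc hs
  have hKΩ := hKU.trans hUΩ
  obtain ⟨Θ, hΘ, hell⟩ := hA.elliptic K hKΩ hK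
  have hGK := (continuousOn_gradient hU hG).mono hKU
  have hψc : ContinuousOn (gradient ψ) K := (continuousOn_gradient hU hψ.contDiffOn).mono hKU
  -- the pairing with `∇χ` vanishes outside `tsupport χ`
  have hred : ∀ χ : EuclideanSpace ℝ (Fin n) → ℝ, tsupport χ ⊆ K →
      ∫ x in U, aNorm A x (gradient G x) ^ (p - 2) * aInner A x (gradient G x) (gradient χ x)
      = ∫ x in K, aNorm A x (gradient G x) ^ (p - 2) *
          aInner A x (gradient G x) (gradient χ x) := by
    intro χ hχ
    refine setIntegral_eq_of_subset_of_forall_sdiff_eq_zero hU.measurableSet hKU fun x hx => ?_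
    rw [gradient_eq_zero_of_notMem fun h => hx.2 (hχ h), aInner_zero_right, mul_zero]
  have hF : IntegrableOn (fun x => aNorm A x (gradient G x) ^ (p - 1)) K :=
    ((hA.continuousOn_aNorm hKΩ hK hGK).rpow_const
      fun _ _ => Or.inr (by linarith)).integrableOn_compact hK
  set M := ∫ x in K, aNorm A x (gradient G x) ^ (p - 1) with hM
  have hM0 : 0 ≤ M := integral_nonneg fun x => Real.rpow_nonneg (aNorm_nonneg _ _) _
  set I := ∫ x in U, aNorm A x (gradient G x) ^ (p - 2) *
      aInner A x (gradient G x) (gradient ψ x) with hI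
  have key : ∀ ε > (0 : ℝ), |I| ≤ M * (√Θ * ε) := by
    intro ε hε
    obtain ⟨χ, hχ, hχK, hclose⟩ := happ ε hε
    have hχc : ContinuousOn (gradient χ) K :=
      (continuousOn_gradient hU ((hχ.1.of_le (by exact_mod_cast le_top)).contDiffOn)).mono hKU
    have h0 := hharm χ hχ
    rw [hred χ hχK] at h0
    have hIeq : I = ∫ x in K, aNorm A x (gradient G x) ^ (p - 2) *
        aInner A x (gradient G x) (gradient ψ x - gradient χ x) := by
      simp only [aInner_sub_right, mul_sub]
      rw [integral_sub (hA.integrableOn_pairing hKΩ hK hp hGK hψc)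
        (hA.integrableOn_pairing hKΩ hK hp hGK hχc), h0, sub_zero, hI, hred ψ hψK]
    rw [hIeq, hM, ← integral_mul_const, ← Real.norm_eq_abs]
    refine norm_integral_le_of_norm_le (hF.mul_const _) ?_
    filter_upwards [ae_restrict_mem hK.measurableSet] with x hx
    refine (hA.abs_pairing_le (hKΩ hx) hp _ _).trans
      (mul_le_mul_of_nonneg_left ?_ (Real.rpow_nonneg (aNorm_nonneg _ _) _))
    refine Real.sqrt_le_iff.2 ⟨by positivity, ?_⟩
    rw [mul_pow, Real.sq_sqrt hΘ.le]
    refine ((hell x hx _).2).trans (mul_le_mul_of_nonneg_left ?_ hΘ.le)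
    rw [norm_sub_rev]
    exact pow_le_pow_left₀ (norm_nonneg _) (hclose x) 2
  by_contra hne
  have hpos : 0 < |I| := abs_pos.2 hne
  have hD : 0 < M * √Θ + 1 := by positivity
  have h1 := key (|I| / (M * √Θ + 1)) (by positivity)
  have h2 : M * (√Θ * (|I| / (M * √Θ + 1))) = M * √Θ * |I| / (M * √Θ + 1) := by ring
  rw [h2, le_div_iff₀ hD] at h1
  linarith

end Integration

/-! ### The test function `|φ|^p G^{1-p}` -/

section HardyTest

variable {n : ℕ} {U : Set (EuclideanSpace ℝ (Fin n))} {p : ℝ}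
  {φ G : EuclideanSpace ℝ (Fin n) → ℝ}

lemma tsupport_hardyTest_subset (hp : 1 < p) :
    tsupport (fun x => |φ x| ^ p * G x ^ (1 - p)) ⊆ tsupport φ := by
  refine closure_mono fun x hx => ?_
  contrapose! hx
  have : φ x = 0 := by simpa using hx
  simp [this, Real.zero_rpow (by linarith : p ≠ 0)]

lemma contDiff_hardyTest (hp : 1 < p) (hU : IsOpen U) (hφ : IsTestFun U φ)
    (hG : ContDiffOn ℝ 1 G U) (hpos : ∀ x ∈ U, 0 < G x) :
    ContDiff ℝ 1 (fun x => |φ x| ^ p * G x ^ (1 - p)) := by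
  rw [contDiff_iff_contDiffAt]
  intro x
  by_cases hx : x ∈ tsupport φ
  · have hxU := hφ.2.2 hx
    have h1 : ContDiffAt ℝ 1 (fun x => |φ x| ^ p) x :=
      ((contDiff_norm_rpow (E := ℝ) hp).comp (hφ.1.of_le (by exact_mod_cast le_top))).contDiffAt
    exact h1.mul ((hG.contDiffAt (hU.mem_nhds hxU)).rpow_const_of_ne (hpos x hxU).ne')
  · have h0 : (fun x => |φ x| ^ p * G x ^ (1 - p)) =ᶠ[𝓝 x] fun _ => 0 :=
      notMem_tsupport_iff_eventuallyEq.1 fun h => hx (tsupport_hardyTest_subset hp h)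
    exact contDiffAt_const.congr_of_eventuallyEq h0

lemma gradient_hardyTest (hp : 1 < p) (hU : IsOpen U) (hφ : IsTestFun U φ)
    (hG : ContDiffOn ℝ 1 G U) (hpos : ∀ x ∈ U, 0 < G x) {x : EuclideanSpace ℝ (Fin n)}
    (hx : x ∈ U) :
    gradient (fun x => |φ x| ^ p * G x ^ (1 - p)) x
      = (|φ x| ^ p * ((1 - p) * G x ^ (-p))) • gradient G x
        + (G x ^ (1 - p) * (p * |φ x| ^ (p - 2) * φ x)) • gradient φ x := by
  have hφd : HasFDerivAt φ (fderiv ℝ φ x) x :=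
    (hφ.1.differentiable (by simp)).differentiableAt.hasFDerivAt
  have hGd : HasFDerivAt G (fderiv ℝ G x) x :=
    ((hG.contDiffAt (hU.mem_nhds hx)).differentiableAt one_ne_zero).hasFDerivAt
  have h1 := (hasDerivAt_abs_rpow (φ x) hp).comp_hasFDerivAt x hφd
  have h2 := (Real.hasDerivAt_rpow_const (x := G x) (p := 1 - p)
    (Or.inl (hpos x hx).ne')).comp_hasFDerivAt x hGd
  have h3 := (h1.mul h2).fderiv
  simp only [Function.comp_def] at h3
  rw [gradient, gradient, gradient]
  erw [h3]
  rw [show 1 - p - 1 = -p by ring]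
  simp only [map_add, map_smul, smul_smul]

end HardyTest

theorem hardy_inequality_pA_laplacian
    {n : ℕ} (hn : 2 ≤ n) (Ω : Set (EuclideanSpace ℝ (Fin n)))
    (hΩopen : IsOpen Ω) (hΩconn : IsConnected Ω)
    (p : ℝ) (hp : 1 < p)
    (A : EuclideanSpace ℝ (Fin n) → Matrix (Fin n) (Fin n) ℝ)
    (hA : IsEllipticMatrix Ω A)
    (h0 : (0 : EuclideanSpace ℝ (Fin n)) ∈ Ω) (hpn : p ≤ n)
    (hsub : IsSubcritical A p (fun _ => (0:ℝ)) Ω)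
    (G : EuclideanSpace ℝ (Fin n) → ℝ)
    (hG1 : ContDiffOn ℝ 1 G (Ω \ {0}))
    (hGpos : ∀ x ∈ Ω \ {0}, 0 < G x)
    (hGharm : IsPAHarmonic A p (Ω \ {0}) G)
    (hGsing : Tendsto G (𝓝[Ω \ {0}] 0) atTop)
    (hGinf : TendstoZeroAtInfinityIn Ω (Ω \ {0}) G) :
    ∀ φ, IsTestFun (Ω \ {0}) φ →
      ((p - 1) / p) ^ p *
          (∫ x in Ω \ {0}, (aNorm A x (gradient G x) / G x) ^ p * |φ x| ^ p)
        ≤ ∫ x in Ω \ {0}, (aNorm A x (gradient φ x)) ^ p := by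
  intro φ hφ
  have hU : IsOpen (Ω \ {0}) := hΩopen.sdiff isClosed_singleton
  have hUΩ : Ω \ {0} ⊆ Ω := sdiff_subset
  set U := Ω \ {0}
  set ψ := fun x => |φ x| ^ p * G x ^ (1 - p) with hψdef
  have hψ1 : ContDiff ℝ 1 ψ := contDiff_hardyTest hp hU hφ hG1 hGpos
  have hψs : tsupport ψ ⊆ tsupport φ := tsupport_hardyTest_subset hp
  have hψc : HasCompactSupport ψ := hφ.2.1.of_isClosed_subset (isClosed_tsupport _) hψs
  have hzero := hGharm.integral_eq_zero_of_contDiff_one hA hp hU hUΩ hG1 hψ1 hψc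
    (hψs.trans hφ.2.2)
  have hK : IsCompact (tsupport φ) := hφ.2.1
  have hKU : tsupport φ ⊆ U := hφ.2.2
  have hKΩ := hKU.trans hUΩ
  have hGK := (continuousOn_gradient hU hG1).mono hKU
  have hφ1 : ContDiff ℝ 1 φ := hφ.1.of_le (by exact_mod_cast le_top)
  have hφK := (continuousOn_gradient hU hφ1.contDiffOn).mono hKU
  have hψK := (continuousOn_gradient hU hψ1.contDiffOn).mono hKU
  have hp0 : p ≠ 0 := by linarith
  have hint1 : IntegrableOn (fun x => (aNorm A x (gradient G x) / G x) ^ p * |φ x| ^ p) U := by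
    refine IntegrableOn.of_forall_sdiff_eq_zero (s := tsupport φ)
      (ContinuousOn.integrableOn_compact hK ?_) hU.measurableSet fun x hx => ?_
    · refine ContinuousOn.mul (ContinuousOn.rpow_const (ContinuousOn.div
        (hA.continuousOn_aNorm hKΩ hK hGK) (hG1.continuousOn.mono hKU)
        fun x hx => (hGpos x (hKU hx)).ne') fun _ _ => Or.inr (by linarith)) ?_
      exact (hφ1.continuous.abs.rpow_const fun _ => Or.inr (by linarith)).continuousOn
    · rw [image_eq_zero_of_notMem_tsupport hx.2, abs_zero, Real.zero_rpow hp0, mul_zero]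
  have hint2 : IntegrableOn (fun x => aNorm A x (gradient φ x) ^ p) U := by
    refine IntegrableOn.of_forall_sdiff_eq_zero (s := tsupport φ)
      (ContinuousOn.integrableOn_compact hK ?_) hU.measurableSet fun x hx => ?_
    · exact (hA.continuousOn_aNorm hKΩ hK hφK).rpow_const fun _ _ => Or.inr (by linarith)
    · rw [gradient_eq_zero_of_notMem hx.2, aNorm_zero, Real.zero_rpow hp0]
  have hint3 : IntegrableOn (fun x => aNorm A x (gradient G x) ^ (p - 2) *
      aInner A x (gradient G x) (gradient ψ x)) U := by
    refine IntegrableOn.of_forall_sdiff_eq_zero (s := tsupport φ)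
      (hA.integrableOn_pairing hKΩ hK hp hGK hψK) hU.measurableSet fun x hx => ?_
    rw [gradient_eq_zero_of_notMem fun h => hx.2 (hψs h), aInner_zero_right, mul_zero]
  have hmono := setIntegral_mono_on
    ((hint1.const_mul (((p - 1) / p) ^ p)).add (hint3.const_mul (((p - 1) / p) ^ (p - 1))))
    hint2 hU.measurableSet (fun x hx => ?_)
  · simp only [Pi.add_apply] at hmono
    rw [integral_add (hint1.const_mul _) (hint3.const_mul _), integral_const_mul,
      integral_const_mul, hzero, mul_zero, add_zero] at hmono
    exact hmono
  · have hγ := hGpos x hx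
    have hg := aNorm_nonneg (A := A) x (gradient G x)
    have hpair := pairing_le (s := φ x) hp hγ hg
      (hA.abs_pairing_le (hUΩ hx) hp (gradient G x) (gradient φ x))
    have hy := young_hardy (a := aNorm A x (gradient G x) / G x * |φ x|)
      (by positivity) (aNorm_nonneg (A := A) x (gradient φ x)) hp
    have hl : 0 ≤ ((p - 1) / p) ^ (p - 1) :=
      Real.rpow_nonneg (div_nonneg (by linarith) (by linarith)) _
    have hm := mul_le_mul_of_nonneg_left hpair hl
    simp only [Pi.add_apply]
    rw [gradient_hardyTest hp hU hφ hG1 hGpos hx, aInner_add_right, aInner_smul_right,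
      aInner_smul_right, ← hA.aNorm_sq (hUΩ hx),
      ← Real.mul_rpow (div_nonneg hg hγ.le) (abs_nonneg _),
      add_comm (|φ x| ^ p * _ * _)]
    linarith
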